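/- Let K be a field of characteristic 0, let f and g be nonconstant, relatively prime polynomials in K[t], set A = f² − g², B = 2fg, C = f² + g², and let w ∈ K[t] be a nonzero polynomial. Then for every positive integer r, the triple (x, y, z) = (1, r, 1) is not a solution of (wA)^x + (wB)^y = (wC)^z; that is, wA + (wB)^r ≠ wC for all r ≥ 1. -/

import Mathlib

open Polynomial

/-!
The equation `w (f² - g²) + (2wfg)^r = w (f² + g²)` says `(w · 2fg)^r = w · 2g²`. The base of a
positive power divides the power, so cancelling `w` leaves `2fg ∣ 2g²`, and cancelling `2g` leaves
`f ∣ g`. As `f` and `g` are relatively prime, `f` must be a unit.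
-/

theorem dvd_of_mul_pow_eq_mul {M : Type*} [MonoidWithZero M] [IsLeftCancelMulZero M]
    {a b c : M} {r : ℕ} (ha : a ≠ 0) (hr : r ≠ 0) (h : (a * b) ^ r = a * c) : b ∣ c :=
  (mul_dvd_mul_iff_left ha).mp (h ▸ dvd_pow_self (a * b) hr)

theorem dvd_of_mul_mul_dvd_mul_sq {M : Type*} [CommMonoidWithZero M] [IsCancelMulZero M]
    {a b c : M} (ha : a ≠ 0) (h : a * b * c ∣ a * c ^ 2) : b ∣ c := by
  obtain rfl | hc := eq_or_ne c 0
  · exact dvd_zero b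
  · rw [mul_assoc, sq, mul_dvd_mul_iff_left ha] at h
    exact (mul_dvd_mul_iff_right hc).mp h

theorem jesmanowicz_poly_not_1r1_general {R : Type*} [CommRing R] [IsDomain R] {f g w : R} {r : ℕ}
    (h2 : (2 : R) ≠ 0) (hf : ¬ IsUnit f) (hfg : IsRelPrime f g) (hw : w ≠ 0) (hr : r ≠ 0) :
    w * (f ^ 2 - g ^ 2) + (w * (2 * f * g)) ^ r ≠ w * (f ^ 2 + g ^ 2) := by
  intro h
  have hpow : (w * (2 * f * g)) ^ r = w * (2 * g ^ 2) := by linear_combination h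
  have hdvd : 2 * f * g ∣ 2 * g ^ 2 := dvd_of_mul_pow_eq_mul hw hr hpow
  exact hf (hfg dvd_rfl (dvd_of_mul_mul_dvd_mul_sq h2 hdvd))

theorem jesmanowicz_poly_not_1r1
    {K : Type*} [Field K] [CharZero K]
    (f g w : K[X])
    (hf : 0 < f.natDegree) (hg : 0 < g.natDegree)
    (hfg : IsCoprime f g) (hw : w ≠ 0) :
    ∀ r : ℕ, 1 ≤ r →
      w * (f ^ 2 - g ^ 2) + (w * (2 * f * g)) ^ r ≠ w * (f ^ 2 + g ^ 2) :=
  fun _ hr ↦ jesmanowicz_poly_not_1r1_general two_ne_zero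
    (not_isUnit_of_natDegree_pos f hf) hfg.isRelPrime hw (Nat.one_le_iff_ne_zero.mp hr)
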